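/- arXiv:1310.4618 — 3 statements merged into one kernel-verified Lean document; each statement's English description precedes it below -/
import Mathlib

section
/- If R ∈ S²_B(⋀²ℝⁿ) is an Einstein algebraic curvature operator (Ric(R) is a scalar multiple of the identity of ℝⁿ), then Q(R) is also Einstein; moreover if R is Ricci-flat (Ric(R) = 0), then Q(R) is Ricci-flat. -/
open scoped BigOperators
open Matrix Filter

noncomputable section

/-- `so n`: the Lie algebra of real skew-symmetric `n × n` matrices, as a submodule of
matrices.  It is the model for `⋀²ℝⁿ` under the identification `x ∧ y ↦ x yᵀ - y xᵀ`,
i.e. `(x ∧ y)(z) = ⟨y,z⟩x - ⟨x,z⟩y`. -/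
def so (n : ℕ) : Submodule ℝ (Matrix (Fin n) (Fin n) ℝ) where
  carrier := {A | Aᵀ = -A}
  add_mem' := fun {a b} ha hb => by
    simp only [Set.mem_setOf_eq] at *
    rw [Matrix.transpose_add, ha, hb, neg_add]
  zero_mem' := by simp
  smul_mem' := fun c {a} ha => by
    simp only [Set.mem_setOf_eq] at *
    rw [Matrix.transpose_smul, ha, smul_neg]

lemma mem_so {n : ℕ} {A : Matrix (Fin n) (Fin n) ℝ} : A ∈ so n ↔ Aᵀ = -A := Iff.rfl

lemma so_skew {n : ℕ} (X : so n) : (X.1)ᵀ = -X.1 := mem_so.mp X.2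

lemma so_skew' {n : ℕ} (X : so n) (i j : Fin n) : X.1 j i = -X.1 i j := by
  have h := congrFun (congrFun (so_skew X) i) j
  simpa [Matrix.transpose_apply] using h

/-- The Lie bracket (matrix commutator) on `so n`. -/
def brkt {n : ℕ} (X Y : so n) : so n :=
  ⟨X.1 * Y.1 - Y.1 * X.1, by
    rw [mem_so, Matrix.transpose_sub, Matrix.transpose_mul, Matrix.transpose_mul,
      so_skew X, so_skew Y]
    simp [neg_sub]⟩

/-- The inner product `⟨A, B⟩ = -(1/2) tr (A B)` on `so n ≅ ⋀²ℝⁿ`, for which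
`{e_i ∧ e_j : i < j}` is orthonormal. -/
def ip {n : ℕ} (X Y : so n) : ℝ := -(1 / 2) * (X.1 * Y.1).trace

/-- `ip X` as a linear functional. -/
def ipL {n : ℕ} (X : so n) : so n →ₗ[ℝ] ℝ where
  toFun Y := ip X Y
  map_add' Y Z := by
    simp [ip, Matrix.mul_add, Matrix.trace_add]
    ring
  map_smul' c Y := by
    simp [ip, Matrix.mul_smul, Matrix.trace_smul]
    ring

/-- The wedge `x ∧ y` of two vectors, as an element of `so n`. -/
def wedgeVec {n : ℕ} (x y : Fin n → ℝ) : so n :=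
  ⟨Matrix.of fun i j => x i * y j - y i * x j, by
    rw [mem_so]
    ext i j
    simp [Matrix.transpose_apply]
    ring⟩

/-- Index set for the standard orthonormal basis `{e_i ∧ e_j : i < j}` of `so n`. -/
def pairs (n : ℕ) : Finset (Fin n × Fin n) := Finset.univ.filter (fun p => p.1 < p.2)

/-- Standard basis vector of `ℝⁿ`. -/
def stdVec {n : ℕ} (i : Fin n) : Fin n → ℝ := Pi.single i 1

/-- The standard orthonormal basis element `e_i ∧ e_j` of `so n`. -/
def omegaB {n : ℕ} (p : Fin n × Fin n) : so n := wedgeVec (stdVec p.1) (stdVec p.2)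

/-- Hamilton's sharp product `A # B` of self-adjoint endomorphisms of `⋀²ℝⁿ ≅ so n`:
`⟨(A # B)(φ), ψ⟩ = (1/2) Σ_{α,β} ⟨[A ω_α, B ω_β], φ⟩ ⟨[ω_α, ω_β], ψ⟩`
over the orthonormal basis `{ω_α} = {e_i ∧ e_j : i < j}`. -/
def sharp {n : ℕ} (A B : Module.End ℝ (so n)) : Module.End ℝ (so n) :=
  (1 / 2 : ℝ) • ∑ p ∈ pairs n, ∑ q ∈ pairs n,
    (ipL (brkt (A (omegaB p)) (B (omegaB q)))).smulRight (brkt (omegaB p) (omegaB q))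

/-- The bilinear map `Q(A,B) = (1/2)(AB + BA) + A # B`. -/
def Qbil {n : ℕ} (A B : Module.End ℝ (so n)) : Module.End ℝ (so n) :=
  (1 / 2 : ℝ) • (A * B + B * A) + sharp A B

/-- `Q(R) = R² + R # R`. -/
def Qop {n : ℕ} (R : Module.End ℝ (so n)) : Module.End ℝ (so n) := R * R + sharp R R

/-- Self-adjointness of an endomorphism of `so n ≅ ⋀²ℝⁿ`. -/
def IsSelfAdjointCO {n : ℕ} (R : Module.End ℝ (so n)) : Prop :=
  ∀ X Y : so n, ip (R X) Y = ip X (R Y)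

/-- The first Bianchi identity. -/
def SatBianchi {n : ℕ} (R : Module.End ℝ (so n)) : Prop :=
  ∀ x y z w : Fin n → ℝ,
    ip (R (wedgeVec x y)) (wedgeVec z w) + ip (R (wedgeVec y z)) (wedgeVec x w)
      + ip (R (wedgeVec z x)) (wedgeVec y w) = 0

/-- Algebraic curvature operators: self-adjoint endomorphisms of `⋀²ℝⁿ` satisfying the
first Bianchi identity.  `IsACO R` says `R ∈ S²_B(⋀²ℝⁿ)`. -/
def IsACO {n : ℕ} (R : Module.End ℝ (so n)) : Prop := IsSelfAdjointCO R ∧ SatBianchi R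

/-- The Ricci tensor of `R`, `Ric(R)_{ij} = Σ_k ⟨R(e_i ∧ e_k), e_j ∧ e_k⟩`. -/
def RicM {n : ℕ} (R : Module.End ℝ (so n)) : Matrix (Fin n) (Fin n) ℝ :=
  Matrix.of fun i j => ∑ k, ip (R (wedgeVec (stdVec i) (stdVec k))) (wedgeVec (stdVec j) (stdVec k))

/-- The scalar curvature `s(R) = tr Ric(R)`. -/
def scal {n : ℕ} (R : Module.End ℝ (so n)) : ℝ := (RicM R).trace

/-- `‖Ric(R)‖² = tr (Ric(R)²)`. -/
def ricNormSq {n : ℕ} (R : Module.End ℝ (so n)) : ℝ := (RicM R * RicM R).trace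

/-- The traceless Ricci tensor `Ric₀(R)`. -/
def Ric0M {n : ℕ} (R : Module.End ℝ (so n)) : Matrix (Fin n) (Fin n) ℝ :=
  RicM R - (scal R / n) • (1 : Matrix (Fin n) (Fin n) ℝ)

/-- `R` is Einstein if `Ric(R)` is a scalar multiple of the identity of `ℝⁿ`. -/
def IsEinstein {n : ℕ} (R : Module.End ℝ (so n)) : Prop :=
  ∃ c : ℝ, RicM R = c • (1 : Matrix (Fin n) (Fin n) ℝ)

lemma wedgeEnd_key {n : ℕ} (A B : Matrix (Fin n) (Fin n) ℝ) (M : so n) :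
    (A * M.1 * Bᵀ + B * M.1 * Aᵀ)ᵀ = -(A * M.1 * Bᵀ + B * M.1 * Aᵀ) := by
  have hM := so_skew M
  rw [Matrix.transpose_add, Matrix.transpose_mul, Matrix.transpose_mul,
    Matrix.transpose_mul, Matrix.transpose_mul, Matrix.transpose_transpose,
    Matrix.transpose_transpose, hM]
  simp only [Matrix.mul_neg, Matrix.neg_mul, Matrix.mul_assoc, neg_add]
  abel

/-- The wedge `A ∧ B` of two endomorphisms of `ℝⁿ`, as an endomorphism of `⋀²ℝⁿ ≅ so n`:
`(A ∧ B)(v ∧ w) = (1/2)(Av ∧ Bw + Bv ∧ Aw)`, i.e. `M ↦ (1/2)(A M Bᵀ + B M Aᵀ)`. -/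
def wedgeEnd {n : ℕ} (A B : Matrix (Fin n) (Fin n) ℝ) : Module.End ℝ (so n) where
  toFun M := ⟨(1 / 2 : ℝ) • (A * M.1 * Bᵀ + B * M.1 * Aᵀ), by
    rw [mem_so, Matrix.transpose_smul, wedgeEnd_key, smul_neg]⟩
  map_add' M N := by
    apply Subtype.ext
    simp [Matrix.mul_add, Matrix.add_mul, smul_add]
    abel
  map_smul' c M := by
    apply Subtype.ext
    simp [Matrix.mul_smul, Matrix.smul_mul, smul_smul, mul_comm]

/-- Inner product `⟨A, B⟩ = tr(A ∘ B)` on endomorphisms of `⋀²ℝⁿ` (the Frobenius inner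
product for self-adjoint operators). -/
def endIP {n : ℕ} (A B : Module.End ℝ (so n)) : ℝ := LinearMap.trace ℝ ↥(so n) (A * B)

/-- Norm of an endomorphism of `⋀²ℝⁿ` induced by `endIP`. -/
def endNorm {n : ℕ} (A : Module.End ℝ (so n)) : ℝ := Real.sqrt (endIP A A)

/-- Huisken's trilinear form `tri(A,B,C) = tr((AB + BA + 2 A#B) ∘ C) = 2⟨Q(A,B), C⟩`. -/
def tri {n : ℕ} (A B C : Module.End ℝ (so n)) : ℝ :=
  LinearMap.trace ℝ ↥(so n) ((A * B + B * A + (2 : ℝ) • sharp A B) * C)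

/-- The identity component `R_I = (s(R)/(n(n-1))) id ∧ id` of a curvature operator. -/
def compI {n : ℕ} (R : Module.End ℝ (so n)) : Module.End ℝ (so n) :=
  (scal R / ((n : ℝ) * ((n : ℝ) - 1))) • 1

/-- The traceless-Ricci component `R_{Ric₀} = (2/(n-2)) Ric₀(R) ∧ id`. -/
def compRic0 {n : ℕ} (R : Module.End ℝ (so n)) : Module.End ℝ (so n) :=
  (2 / ((n : ℝ) - 2)) • wedgeEnd (Ric0M R) 1

/-- The Weyl component `R_W = R - R_I - R_{Ric₀}`. -/
def compW {n : ℕ} (R : Module.End ℝ (so n)) : Module.End ℝ (so n) := R - compI R - compRic0 R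

/-- The derivative `DQ̃(R)` of the normalized vector field
`Q̃(R) = Q(R) - ‖Ric R‖² R` at `R`, applied to `A`:
`DQ̃(R)(A) = 2Q(R,A) - ‖Ric R‖² A - 2 tr(Ric R · Ric A) R`. -/
def DQt {n : ℕ} (R A : Module.End ℝ (so n)) : Module.End ℝ (so n) :=
  (2 : ℝ) • Qbil R A - ricNormSq R • A - (2 * (RicM R * RicM A).trace) • R

/-!
Write `R_ijkl = ⟨R(e_i ∧ e_j), e_k ∧ e_l⟩`. The ad-invariance of the inner product and the
completeness of `{e_i ∧ e_j : i < j}` reduce `R # R` to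
`⟨(R # R)φ, e_j ∧ e_k⟩ = ∑_a ⟨[R(e_j ∧ e_a), R(e_a ∧ e_k)], φ⟩`. Tracing gives two terms for
`Ric(R # R)_ij`: the contraction `∑_{a,m} R_jaim Ric_am`, and a quadratic term
`-∑_{a,k,m} R_akim R_jamk`, which the Bianchi identity turns into
`-(1/2) ∑_{m,a,k} R_imak R_jmak = -Ric(R²)_ij`. Hence `Ric(Q(R))_ij = ∑_{a,m} R_jaim Ric_am`, and
this is `c² δ_ij` as soon as `Ric(R) = c • 1`.
-/

lemma two_nsmul_sum_pairs {n : ℕ} {M : Type*} [AddCommMonoid M] (f : Fin n × Fin n → M)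
    (hswap : ∀ a b, f (b, a) = f (a, b)) (hdiag : ∀ a, f (a, a) = 0) :
    2 • ∑ p ∈ pairs n, f p = ∑ p, f p := by
  have hgt : ∑ p : Fin n × Fin n with p.2 < p.1, f p = ∑ p ∈ pairs n, f p := by
    rw [pairs, Finset.sum_filter, Finset.sum_filter, ← (Equiv.prodComm _ _).sum_comp]
    simp only [Equiv.prodComm_apply, Prod.swap, hswap, Prod.mk.eta]
  rw [two_nsmul]
  nth_rewrite 2 [← hgt]
  rw [pairs, Finset.sum_filter, Finset.sum_filter, ← Finset.sum_add_distrib]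
  refine Finset.sum_congr rfl fun ⟨a, b⟩ _ => ?_
  rcases lt_trichotomy a b with h | rfl | h
  · simp [h, h.not_gt]
  · simp [hdiag]
  · simp [h, h.not_gt]

lemma two_mul_sum_antisymm_mul {ι S : Type*} [Fintype ι] [CommRing S] (A B : ι → ι → S)
    (hA : ∀ a b, A b a = -A a b) :
    2 * ∑ a, ∑ b, A a b * B a b = ∑ a, ∑ b, A a b * (B a b - B b a) := by
  have hswap : ∑ a, ∑ b, A a b * B b a = -∑ a, ∑ b, A a b * B a b := by
    rw [Finset.sum_comm]
    simp only [← Finset.sum_neg_distrib, ← neg_mul, ← hA]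
  simp only [mul_sub, Finset.sum_sub_distrib, hswap]
  ring

section

variable {n : ℕ}

lemma ip_comm (X Y : so n) : ip X Y = ip Y X := by
  simp only [ip, Matrix.trace_mul_comm X.1]

lemma ip_eq_sum (X Y : so n) : ip X Y = (1 / 2) * ∑ a, ∑ b, X.1 a b * Y.1 a b := by
  have hskew : ∀ a b, X.1 a b * Y.1 b a = -(X.1 a b * Y.1 a b) := fun a b => by
    rw [so_skew' Y a b, mul_neg]
  simp only [ip, Matrix.trace, Matrix.diag_apply, Matrix.mul_apply, hskew,
    Finset.sum_neg_distrib]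
  ring

lemma ip_brkt_assoc (X Y Z : so n) : ip (brkt X Y) Z = ip X (brkt Y Z) := by
  simp only [ip, brkt, sub_mul, mul_sub, Matrix.trace_sub, Matrix.mul_assoc]
  rw [Matrix.trace_mul_comm Y.1, Matrix.mul_assoc]

lemma brkt_skew (X Y : so n) : brkt Y X = -brkt X Y :=
  Subtype.ext (neg_sub _ _).symm

/-- The Lie bracket `brkt` of `so n`, bundled as a bilinear map so that bilinear forms such as
`(X, Y) ↦ ⟨[A X, B Y], φ⟩` can be built from it. -/
def brktBilin : so n →ₗ[ℝ] so n →ₗ[ℝ] so n :=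
  LinearMap.mk₂ ℝ brkt
    (fun X Y Z => Subtype.ext <| by simp only [brkt, Submodule.coe_add, add_mul, mul_add]; abel)
    (fun c X Y => Subtype.ext <| by
      simp only [brkt, Submodule.coe_smul, Matrix.smul_mul, Matrix.mul_smul, smul_sub])
    (fun X Y Z => Subtype.ext <| by simp only [brkt, Submodule.coe_add, add_mul, mul_add]; abel)
    (fun c X Y => Subtype.ext <| by
      simp only [brkt, Submodule.coe_smul, Matrix.smul_mul, Matrix.mul_smul, smul_sub])

lemma brkt_neg_left (X Y : so n) : brkt (-X) Y = -brkt X Y :=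
  LinearMap.map_neg₂ brktBilin X Y

lemma coe_omegaB (a b : Fin n) :
    (omegaB (a, b)).1 = Matrix.single a b 1 - Matrix.single b a 1 := by
  ext i j
  simp [omegaB, wedgeVec, stdVec, Matrix.single_apply, Pi.single_apply, ← ite_and, and_comm,
    eq_comm]

lemma omegaB_swap (a b : Fin n) : omegaB (b, a) = -omegaB (a, b) :=
  Subtype.ext <| by ext i j; simp [omegaB, wedgeVec]

lemma omegaB_diag (a : Fin n) : omegaB (a, a) = 0 :=
  Subtype.ext <| by ext i j; simp [omegaB, wedgeVec]

lemma ip_omegaB_right (X : so n) (i j : Fin n) : ip X (omegaB (i, j)) = X.1 i j := by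
  simp only [ip, coe_omegaB, mul_sub, Matrix.trace_sub, Matrix.trace_mul_single,
    MulOpposite.op_one, one_smul, so_skew' X i j]
  ring

lemma sum_pairs_ip_smul_omegaB (X : so n) : ∑ p ∈ pairs n, ip (omegaB p) X • omegaB p = X := by
  ext i j
  have hdouble := two_nsmul_sum_pairs (fun p => ip (omegaB p) X * (omegaB p).1 i j)
    (fun a b => by simp [omegaB_swap a b, ip]) (fun a => by simp [omegaB_diag])
  have hfull : ∑ p, ip (omegaB p) X * (omegaB p).1 i j = X.1 i j - X.1 j i := by
    simp [Fintype.sum_prod_type, ip_comm _ X, ip_omegaB_right, coe_omegaB, mul_sub,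
      Matrix.single_apply, ite_and]
  simp only [Submodule.coe_sum, Submodule.coe_smul, Matrix.sum_apply, Matrix.smul_apply,
    smul_eq_mul]
  rw [hfull, nsmul_eq_mul, Nat.cast_ofNat] at hdouble
  linarith [so_skew' X i j]

lemma sum_pairs_ip_smul_map_omegaB {M : Type*} [AddCommMonoid M] [Module ℝ M]
    (f : so n →ₗ[ℝ] M) (X : so n) : ∑ p ∈ pairs n, ip (omegaB p) X • f (omegaB p) = f X := by
  conv_rhs => rw [← sum_pairs_ip_smul_omegaB X]
  simp only [map_sum, map_smul]

lemma brkt_omegaB_omegaB (a b j k : Fin n) :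
    brkt (omegaB (a, b)) (omegaB (j, k)) =
      (if b = j then omegaB (a, k) else 0) - (if a = j then omegaB (b, k) else 0) +
        (if b = k then omegaB (j, a) else 0) - if a = k then omegaB (j, b) else 0 := by
  have hsingle : ∀ a b c d : Fin n, Matrix.single a b (1 : ℝ) * Matrix.single c d 1 =
      if b = c then Matrix.single a d 1 else 0 := fun a b c d => by
    split_ifs with h <;> simp [h]
  apply Subtype.ext
  simp only [brkt, Submodule.coe_add, Submodule.coe_sub, apply_ite Subtype.val, coe_omegaB,
    Submodule.coe_zero, mul_sub, sub_mul, hsingle, eq_comm (a := j), eq_comm (a := k)]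
  split_ifs <;> abel

lemma sum_map_brkt_omegaB {M : Type*} [AddCommGroup M] [Module ℝ M]
    (G : so n →ₗ[ℝ] so n →ₗ[ℝ] M) (j k : Fin n) :
    ∑ p, G (brkt (omegaB p) (omegaB (j, k))) (omegaB p) =
      2 • ∑ a, (G (omegaB (j, a)) (omegaB (a, k)) + G (omegaB (a, k)) (omegaB (a, j))) := by
  have hite : ∀ (P : Prop) [Decidable P] (X Y : so n),
      G (if P then X else 0) Y = if P then G X Y else 0 := fun P _ X Y => by
    split_ifs <;> simp
  have hleft : ∀ a, G (omegaB (a, k)) (omegaB (j, a)) = -G (omegaB (a, k)) (omegaB (a, j)) :=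
    fun a => by rw [omegaB_swap a j, map_neg]
  have hright : ∀ a, G (omegaB (j, a)) (omegaB (k, a)) = -G (omegaB (j, a)) (omegaB (a, k)) :=
    fun a => by rw [omegaB_swap a k, map_neg]
  simp only [Fintype.sum_prod_type, brkt_omegaB_omegaB, map_add, map_sub, LinearMap.add_apply,
    LinearMap.sub_apply, Finset.sum_add_distrib, Finset.sum_sub_distrib, hite,
    Finset.sum_ite_irrel, Finset.sum_const_zero, Finset.sum_ite_eq', Finset.mem_univ, if_true,
    hleft, hright, Finset.sum_neg_distrib]
  abel

lemma ip_sharp (A B : Module.End ℝ (so n)) (φ ψ : so n) :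
    ip (sharp A B φ) ψ = (1 / 2) * ∑ p ∈ pairs n, ∑ q ∈ pairs n,
      ip (brkt (A (omegaB p)) (B (omegaB q))) φ * ip (brkt (omegaB p) (omegaB q)) ψ := by
  rw [ip_comm]
  change ipL ψ _ = _
  simp only [sharp, LinearMap.smul_apply, LinearMap.sum_apply, LinearMap.smulRight_apply,
    map_smul, map_sum, smul_eq_mul, ip_comm _ ψ]
  rfl

lemma ip_sharp_omegaB (A B : Module.End ℝ (so n)) (φ : so n) (j k : Fin n) :
    ip (sharp A B φ) (omegaB (j, k)) =
      (1 / 2) * ∑ a, (ip (brkt (A (omegaB (j, a))) (B (omegaB (a, k)))) φ +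
        ip (brkt (A (omegaB (a, k))) (B (omegaB (a, j)))) φ) := by
  let G : so n →ₗ[ℝ] so n →ₗ[ℝ] ℝ := (brktBilin.compl₁₂ A B).compr₂ (ipL φ)
  have hG : ∀ X Y, ip (brkt (A X) (B Y)) φ = G X Y := fun X Y => ip_comm _ _
  have hcontract : ∀ q, ∑ p ∈ pairs n,
      G (omegaB p) (omegaB q) * ip (brkt (omegaB p) (omegaB q)) (omegaB (j, k)) =
        G (brkt (omegaB q) (omegaB (j, k))) (omegaB q) := fun q => by
    simp only [ip_brkt_assoc, mul_comm (G _ _)]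
    exact sum_pairs_ip_smul_map_omegaB (G.flip (omegaB q)) _
  have hdouble := two_nsmul_sum_pairs
    (fun q => G (brkt (omegaB q) (omegaB (j, k))) (omegaB q))
    (fun a b => by
      simp only [omegaB_swap a b, brkt_neg_left, map_neg, LinearMap.neg_apply, neg_neg])
    (fun a => by simp only [omegaB_diag, map_zero])
  have hpairs := nsmul_right_injective two_ne_zero (hdouble.trans (sum_map_brkt_omegaB G j k))
  rw [ip_sharp, Finset.sum_comm]
  simp only [hG, hcontract, hpairs]

lemma ip_sharp_self_omegaB (R : Module.End ℝ (so n)) (φ : so n) (j k : Fin n) :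
    ip (sharp R R φ) (omegaB (j, k)) =
      ∑ a, ip (brkt (R (omegaB (j, a))) (R (omegaB (a, k)))) φ := by
  have hsymm : ∀ a, brkt (R (omegaB (a, k))) (R (omegaB (a, j))) =
      brkt (R (omegaB (j, a))) (R (omegaB (a, k))) := fun a => by
    rw [omegaB_swap a j, map_neg, brkt_neg_left, brkt_skew]
  simp only [ip_sharp_omegaB, hsymm, Finset.sum_add_distrib]
  ring

/-- The components `R_ijkl = ⟨R(e_i ∧ e_j), e_k ∧ e_l⟩` of an endomorphism `R` of `⋀²ℝⁿ`, in which
the contractions of `R` are computed. -/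
def riem (R : Module.End ℝ (so n)) (i j k l : Fin n) : ℝ := ip (R (omegaB (i, j))) (omegaB (k, l))

variable {R : Module.End ℝ (so n)}

lemma apply_omegaB_apply (R : Module.End ℝ (so n)) (i j k l : Fin n) :
    (R (omegaB (i, j))).1 k l = riem R i j k l :=
  (ip_omegaB_right _ _ _).symm

lemma RicM_apply (R : Module.End ℝ (so n)) (i j : Fin n) : RicM R i j = ∑ k, riem R i k j k := rfl

lemma riem_swap_left (R : Module.End ℝ (so n)) (i j k l : Fin n) :
    riem R j i k l = -riem R i j k l := by
  simp only [← apply_omegaB_apply, omegaB_swap i j, map_neg]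
  rfl

lemma riem_swap_right (R : Module.End ℝ (so n)) (i j k l : Fin n) :
    riem R i j l k = -riem R i j k l := by
  simpa only [apply_omegaB_apply] using so_skew' (R (omegaB (i, j))) k l

lemma IsSelfAdjointCO.riem_pair_comm (hR : IsSelfAdjointCO R) (i j k l : Fin n) :
    riem R i j k l = riem R k l i j := by
  rw [riem, hR, ip_comm, riem]

lemma SatBianchi.riem_cyclic (hR : SatBianchi R) (i j k l : Fin n) :
    riem R i j k l + riem R j k i l + riem R k i j l = 0 :=
  hR (stdVec i) (stdVec j) (stdVec k) (stdVec l)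

lemma IsACO.riem_sub_riem (hR : IsACO R) (j a m k : Fin n) :
    riem R j a m k - riem R j k m a = riem R j m a k := by
  linarith [hR.2.riem_cyclic j a m k, hR.1.riem_pair_comm a m j k, riem_swap_right R j k a m,
    riem_swap_left R j m a k]

lemma IsACO.sum_riem_mul_riem (hR : IsACO R) (i j m : Fin n) :
    ∑ a, ∑ k, riem R i m a k * riem R j a m k =
      (1 / 2) * ∑ a, ∑ k, riem R i m a k * riem R j m a k := by
  have htwo := two_mul_sum_antisymm_mul (fun a k => riem R i m a k) (fun a k => riem R j a m k)
    fun a k => riem_swap_right R i m a k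
  simp only [hR.riem_sub_riem] at htwo
  linarith

lemma RicM_mul {A : Module.End ℝ (so n)} (hA : IsSelfAdjointCO A) (B : Module.End ℝ (so n))
    (i j : Fin n) :
    RicM (A * B) i j = (1 / 2) * ∑ m, ∑ a, ∑ k, riem B i m a k * riem A j m a k := by
  have hriem : ∀ m, riem (A * B) i m j m =
      (1 / 2) * ∑ a, ∑ k, riem B i m a k * riem A j m a k := fun m => by
    rw [riem, Module.End.mul_apply, hA, ip_eq_sum]
    simp only [apply_omegaB_apply]
  simp only [RicM_apply, hriem, Finset.mul_sum]

lemma riem_sharp_self (R : Module.End ℝ (so n)) (i k j l : Fin n) :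
    riem (sharp R R) i k j l =
      ∑ a, ∑ m, (riem R j a i m * riem R a l m k - riem R a l i m * riem R j a m k) := by
  simp only [riem, ip_sharp_self_omegaB]
  simp only [ip_omegaB_right, brkt, Matrix.sub_apply, Matrix.mul_apply, Finset.sum_sub_distrib]

lemma IsACO.RicM_sharp_self (hR : IsACO R) (i j : Fin n) :
    RicM (sharp R R) i j = ∑ a, ∑ m, riem R j a i m * RicM R a m - RicM (R * R) i j := by
  have hcontract : ∑ k, ∑ a, ∑ m, riem R j a i m * riem R a k m k =
      ∑ a, ∑ m, riem R j a i m * RicM R a m := by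
    simp only [RicM_apply, Finset.mul_sum]
    rw [Finset.sum_comm]
    exact Finset.sum_congr rfl fun a _ => Finset.sum_comm
  have hbianchi : ∑ k, ∑ a, ∑ m, riem R a k i m * riem R j a m k = RicM (R * R) i j := by
    calc ∑ k, ∑ a, ∑ m, riem R a k i m * riem R j a m k
        = ∑ m, ∑ a, ∑ k, riem R i m a k * riem R j a m k := by
          simp only [hR.1.riem_pair_comm _ _ i]
          rw [Finset.sum_comm, Finset.sum_congr rfl fun a _ => Finset.sum_comm, Finset.sum_comm]
      _ = RicM (R * R) i j := by
          simp only [RicM_mul hR.1, hR.sum_riem_mul_riem, Finset.mul_sum]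
  simp only [← hcontract, ← hbianchi, RicM_apply (sharp R R), riem_sharp_self,
    Finset.sum_sub_distrib]

lemma IsACO.RicM_Qop (hR : IsACO R) (i j : Fin n) :
    RicM (Qop R) i j = ∑ a, ∑ m, riem R j a i m * RicM R a m := by
  have hadd : RicM (Qop R) i j = RicM (R * R) i j + RicM (sharp R R) i j := by
    simp only [RicM_apply, riem, Qop, LinearMap.add_apply, ip_omegaB_right, Submodule.coe_add,
      Matrix.add_apply, Finset.sum_add_distrib]
  rw [hadd, hR.RicM_sharp_self]
  ring

lemma IsACO.RicM_Qop_of_RicM_eq_smul_one (hR : IsACO R) {c : ℝ} (hc : RicM R = c • 1) :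
    RicM (Qop R) = c ^ 2 • 1 := by
  ext i j
  calc RicM (Qop R) i j = ∑ a, ∑ m, riem R j a i m * (c • 1 : Matrix _ _ ℝ) a m := by
        rw [hR.RicM_Qop, hc]
    _ = c * RicM R j i := by
        simp [RicM_apply, Matrix.one_apply, Finset.mul_sum, mul_comm]
    _ = (c ^ 2 • 1 : Matrix _ _ ℝ) i j := by
        simp [hc, Matrix.one_apply, eq_comm, sq]

end

/-- If `R ∈ S²_B(⋀²ℝⁿ)` is Einstein then `Q(R)` is Einstein, and if
`R` is Ricci-flat then `Q(R)` is Ricci-flat. -/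
theorem stmt12 (n : ℕ) (R : Module.End ℝ (so n)) (hACO : IsACO R) :
    (IsEinstein R → IsEinstein (Qop R)) ∧ (RicM R = 0 → RicM (Qop R) = 0) := by
  refine ⟨fun ⟨c, hc⟩ => ⟨c ^ 2, hACO.RicM_Qop_of_RicM_eq_smul_one hc⟩, fun h => ?_⟩
  simpa using hACO.RicM_Qop_of_RicM_eq_smul_one (c := 0) (by rw [h, zero_smul])

end
end

section
/- Let c > 0 be a real number and let x₁, x₂, x₃ be real numbers satisfying x₁ + x₂ + x₃ = 0 and the system x₁² + c·x₂x₃ = 0, x₂² + c·x₁x₃ = 0, x₃² + c·x₁x₂ = 0. Then x₁ = x₂ = x₃ = 0. -/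
/-!
Multiplying the `i`-th equation by `xᵢ` gives `xᵢ³ = -c x₁x₂x₃`, which does not depend on `i`.
Where cubing is injective, as over `ℝ`, this forces `x₁ = x₂ = x₃`, and the equations
become `(1 + c) xᵢ² = 0`.
-/

section CommRing

variable {R : Type*} [CommRing R] {c x y z : R}

theorem pow_three_eq_pow_three_of_sq_add_mul_eq_zero
    (hx : x ^ 2 + c * (y * z) = 0) (hy : y ^ 2 + c * (x * z) = 0) : x ^ 3 = y ^ 3 := by
  linear_combination x * hx - y * hy

theorem eq_zero_of_sq_add_mul_self_eq_zero
    (hcube : Function.Injective fun t : R ↦ t ^ 3) (hc : IsLeftRegular (1 + c))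
    (hx : x ^ 2 + c * (x * x) = 0) : x = 0 := by
  have hsq : x ^ 2 = 0 := hc.mul_left_eq_zero_iff.mp (by linear_combination hx)
  have hpow : x ^ 3 = 0 ^ 3 := by linear_combination x * hsq
  exact hcube hpow

theorem stmt18_general {x₁ x₂ x₃ : R}
    (hcube : Function.Injective fun t : R ↦ t ^ 3) (hc : IsLeftRegular (1 + c))
    (h1 : x₁ ^ 2 + c * (x₂ * x₃) = 0)
    (h2 : x₂ ^ 2 + c * (x₁ * x₃) = 0)
    (h3 : x₃ ^ 2 + c * (x₁ * x₂) = 0) :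
    x₁ = 0 ∧ x₂ = 0 ∧ x₃ = 0 := by
  have h12 : x₁ = x₂ := hcube (pow_three_eq_pow_three_of_sq_add_mul_eq_zero h1 h2)
  have h13 : x₁ = x₃ :=
    hcube (pow_three_eq_pow_three_of_sq_add_mul_eq_zero (mul_comm x₂ x₃ ▸ h1) h3)
  subst h12 h13
  have hzero : x₁ = 0 := eq_zero_of_sq_add_mul_self_eq_zero hcube hc h1
  exact ⟨hzero, hzero, hzero⟩

end CommRing

/-- If `c > 0` and `x₁ + x₂ + x₃ = 0` with `x₁² + c x₂x₃ = x₂² + c x₁x₃ = x₃² + c x₁x₂ = 0`,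
then `x₁ = x₂ = x₃ = 0`.  This is the system satisfied by the eigenvalues of the
(anti-)self-dual Weyl components of a 4-dimensional algebraic curvature operator `R`
with `Q(R) = R² + R # R = 0`. -/
theorem stmt18 (c x₁ x₂ x₃ : ℝ) (hc : 0 < c)
    (hsum : x₁ + x₂ + x₃ = 0)
    (h1 : x₁ ^ 2 + c * (x₂ * x₃) = 0)
    (h2 : x₂ ^ 2 + c * (x₁ * x₃) = 0)
    (h3 : x₃ ^ 2 + c * (x₁ * x₂) = 0) :
    x₁ = 0 ∧ x₂ = 0 ∧ x₃ = 0 := by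
  have hc_ne : 1 + c ≠ 0 := by positivity
  exact stmt18_general (Odd.pow_injective (by decide)) (IsRegular.of_ne_zero hc_ne).left h1 h2 h3
end

section
/- Let λ₁, λ₂, λ₃ be real numbers satisfying λ₁ + λ₂ + λ₃ = 1/4 and the system λ₁² + 2λ₂λ₃ = (1/4)λ₁, λ₂² + 2λ₁λ₃ = (1/4)λ₂, λ₃² + 2λ₁λ₂ = (1/4)λ₃. Then (λ₁, λ₂, λ₃) is either (1/12, 1/12, 1/12) or a permutation of (0, 0, 1/4). -/
/-
Put `s = a + b + c`. The equation `a² + 2bc = sa` says `2bc = ab + ac`, so subtracting the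
equations for two of the unknowns gives, for example, `3ac = 3bc`: the three pairwise products
agree wherever `3` can be cancelled. Then either all three numbers are equal or two of them
vanish, and the sum fixes what is left.
-/

theorem three_mul_mul_eq_of_sq_add_two_mul {R : Type*} [CommRing R] {a b c s : R}
    (hsum : a + b + c = s) (ha : a ^ 2 + 2 * (b * c) = s * a)
    (hb : b ^ 2 + 2 * (a * c) = s * b) : 3 * (a * c) = 3 * (b * c) := by
  subst hsum
  linear_combination hb - ha

theorem eq_or_eq_zero_of_mul_eq_mul {M : Type*} [CommMonoidWithZero M] [IsCancelMulZero M]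
    {a b c : M} (hac_bc : a * c = b * c) (hba_ca : b * a = c * a) :
    (a = b ∧ b = c) ∨ (a = 0 ∧ b = 0) ∨ (a = 0 ∧ c = 0) ∨ (b = 0 ∧ c = 0) := by
  rcases mul_eq_mul_right_iff.mp hac_bc with hab | hc <;>
    rcases mul_eq_mul_right_iff.mp hba_ca with hbc | ha
  · exact .inl ⟨hab, hbc⟩
  · exact .inr (.inl ⟨ha, hab.symm.trans ha⟩)
  · exact .inr (.inr (.inr ⟨hbc.trans hc, hc⟩))
  · exact .inr (.inr (.inl ⟨ha, hc⟩))

theorem stmt19_general {R : Type*} [CommRing R] [NoZeroDivisors R] (h_three : (3 : R) ≠ 0)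
    {a b c s : R} (hsum : a + b + c = s) (ha : a ^ 2 + 2 * (b * c) = s * a)
    (hb : b ^ 2 + 2 * (a * c) = s * b) :
    (3 * a = s ∧ 3 * b = s ∧ 3 * c = s) ∨
    (a = 0 ∧ b = 0 ∧ c = s) ∨ (a = 0 ∧ b = s ∧ c = 0) ∨ (a = s ∧ b = 0 ∧ c = 0) := by
  have hc : c ^ 2 + 2 * (b * a) = s * c := by
    subst hsum
    linear_combination -ha - hb
  have hac_bc : a * c = b * c :=
    mul_left_cancel₀ h_three (three_mul_mul_eq_of_sq_add_two_mul hsum ha hb)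
  have hba_ca : b * a = c * a :=
    mul_left_cancel₀ h_three <| three_mul_mul_eq_of_sq_add_two_mul
      (by rw [← hsum]; ring) (by rwa [mul_comm c a]) hc
  subst hsum
  rcases eq_or_eq_zero_of_mul_eq_mul hac_bc hba_ca with
    ⟨rfl, rfl⟩ | ⟨rfl, rfl⟩ | ⟨rfl, rfl⟩ | ⟨rfl, rfl⟩
  · have hthree : 3 * a = a + a + a := by ring
    exact .inl ⟨hthree, hthree, hthree⟩
  all_goals simp

/-- If `λ₁ + λ₂ + λ₃ = 1/4` and `λ_i² + 2λ_jλ_k = (1/4)λ_i` for all cyclic `(i,j,k)`,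
then `(λ₁,λ₂,λ₃)` is `(1/12,1/12,1/12)` or a permutation of `(0,0,1/4)`.  This is the
system satisfied by the eigenvalues of the (anti-)self-dual components of an Einstein
4-dimensional algebraic curvature operator with unit scalar curvature satisfying
`Q(R) = (1/4) R`. -/
theorem stmt19 (l₁ l₂ l₃ : ℝ)
    (hsum : l₁ + l₂ + l₃ = 1 / 4)
    (h1 : l₁ ^ 2 + 2 * (l₂ * l₃) = (1 / 4) * l₁)
    (h2 : l₂ ^ 2 + 2 * (l₁ * l₃) = (1 / 4) * l₂)
    (h3 : l₃ ^ 2 + 2 * (l₁ * l₂) = (1 / 4) * l₃) :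
    (l₁ = 1 / 12 ∧ l₂ = 1 / 12 ∧ l₃ = 1 / 12) ∨
    (l₁ = 0 ∧ l₂ = 0 ∧ l₃ = 1 / 4) ∨
    (l₁ = 0 ∧ l₂ = 1 / 4 ∧ l₃ = 0) ∨
    (l₁ = 1 / 4 ∧ l₂ = 0 ∧ l₃ = 0) := by
  exact (stmt19_general three_ne_zero hsum h1 h2).imp_left fun ⟨h₁, h₂, h₃⟩ =>
    ⟨by linarith only [h₁], by linarith only [h₂], by linarith only [h₃]⟩
end
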